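/- arXiv:2601.21556 — 8 statements merged into one kernel-verified Lean document; each statement's English description precedes it below -/
import Mathlib

section
/- Let R be a ring, 𝒰 a family of left R-modules, and h : M → N a surjective R-linear map of left R-modules such that ker(h) ⊆ Rej_M(𝒰). Then h(JRej_M(𝒰)) = JRej_N(𝒰). -/
/-- The radical of a module: the intersection of all maximal submodules. -/
def moduleRad (R M : Type*) [Ring R] [AddCommGroup M] [Module R M] : Submodule R M :=
  sInf {N : Submodule R M | IsCoatom N}

/-- The JReject of a family of modules `U` in `M`. -/
def jRej (R M : Type*) [Ring R] [AddCommGroup M] [Module R M]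
    {ι : Type*} (U : ι → Type*) [∀ i, AddCommGroup (U i)] [∀ i, Module R (U i)] :
    Submodule R M :=
  ⨅ (i : ι) (f : M →ₗ[R] U i), (moduleRad R (U i)).comap f

/-- The reject of a family of modules `U` in `M`: the intersection of the kernels of all
linear maps from `M` to members of the family. -/
def rej (R M : Type*) [Ring R] [AddCommGroup M] [Module R M]
    {ι : Type*} (U : ι → Type*) [∀ i, AddCommGroup (U i)] [∀ i, Module R (U i)] :
    Submodule R M :=
  ⨅ (i : ι) (f : M →ₗ[R] U i), LinearMap.ker f

/-! Every map from `M` to a member of `𝒰` kills `Rej_M(𝒰)`, hence `ker h`, so it factors through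
`h`. Thus `Hom(M, U i)` is exactly `{f ∘ h | f ∈ Hom(N, U i)}`, and the preimage of `JRej_N(𝒰)`
under `h` is `JRej_M(𝒰)`; the same holds with any submodules `V i` of `U i` in place of the
radicals. -/

section

variable {R M N P : Type*} [Ring R] [AddCommGroup M] [Module R M] [AddCommGroup N] [Module R N]
  [AddCommGroup P] [Module R P]

theorem exists_comp_eq_of_ker_le_ker {h : M →ₗ[R] N} (hsurj : Function.Surjective h)
    {g : M →ₗ[R] P} (hg : LinearMap.ker h ≤ LinearMap.ker g) :
    ∃ f : N →ₗ[R] P, f ∘ₗ h = g := by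
  refine ⟨(LinearMap.ker h).liftQ g hg ∘ₗ (h.quotKerEquivOfSurjective hsurj).symm, ?_⟩
  ext m
  simp

variable {ι : Type*} {U : ι → Type*} [∀ i, AddCommGroup (U i)] [∀ i, Module R (U i)]

theorem rej_le_ker {i : ι} (f : M →ₗ[R] U i) : rej R M U ≤ LinearMap.ker f :=
  (iInf_le _ i).trans (iInf_le _ f)

theorem comp_surjective_of_ker_le_rej {h : M →ₗ[R] N} (hsurj : Function.Surjective h)
    (hker : LinearMap.ker h ≤ rej R M U) (i : ι) :
    Function.Surjective fun f : N →ₗ[R] U i => f ∘ₗ h :=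
  fun g => exists_comp_eq_of_ker_le_ker hsurj (hker.trans (rej_le_ker g))

theorem comap_iInf_comap_eq {h : M →ₗ[R] N} (hsurj : Function.Surjective h)
    (hker : LinearMap.ker h ≤ rej R M U) (V : ∀ i, Submodule R (U i)) :
    (⨅ (i : ι) (f : N →ₗ[R] U i), (V i).comap f).comap h =
      ⨅ (i : ι) (g : M →ₗ[R] U i), (V i).comap g := by
  simp only [Submodule.comap_iInf, ← Submodule.comap_comp]
  exact iInf_congr fun i =>
    (comp_surjective_of_ker_le_rej hsurj hker i).iInf_comp fun g => (V i).comap g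

theorem map_jRej_eq_general {h : M →ₗ[R] N} (hsurj : Function.Surjective h)
    (hker : LinearMap.ker h ≤ rej R M U) (V : ∀ i, Submodule R (U i)) :
    (⨅ (i : ι) (g : M →ₗ[R] U i), (V i).comap g).map h =
      ⨅ (i : ι) (f : N →ₗ[R] U i), (V i).comap f := by
  rw [← comap_iInf_comap_eq hsurj hker V, Submodule.map_comap_eq_of_surjective hsurj]

end

/-- If `h : M → N` is surjective with `ker h ⊆ Rej_M(𝒰)`, then
`h(JRej_M(𝒰)) = JRej_N(𝒰)`. -/
theorem map_jRej_eq (R M N : Type*) [Ring R] [AddCommGroup M] [Module R M]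
    [AddCommGroup N] [Module R N]
    {ι : Type*} (U : ι → Type*) [∀ i, AddCommGroup (U i)] [∀ i, Module R (U i)]
    (h : M →ₗ[R] N) (hsurj : Function.Surjective h)
    (hker : LinearMap.ker h ≤ rej R M U) :
    (jRej R M U).map h = jRej R N U :=
  map_jRej_eq_general hsurj hker fun i => moduleRad R (U i)
end

section
/- Let R be a ring and M a left R-module. The quotient module M/Rad(M) is a faithful R-module if and only if M/Rad(M) cogenerates R (viewed as a left module over itself). -/
universe u

theorem faithfulSMul_of_faithfulSMul_function {R N : Type*} [SMul R N] (A : Type*)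
    [FaithfulSMul R (A → N)] : FaithfulSMul R N where
  eq_of_smul_eq_smul h := eq_of_smul_eq_smul fun f : A → N ↦ funext fun a ↦ h (f a)

theorem faithfulSMul_iff_forall_smul_eq_zero {R N : Type*} [Ring R] [AddCommGroup N]
    [Module R N] : FaithfulSMul R N ↔ ∀ r : R, (∀ x : N, r • x = 0) → r = 0 := by
  simp only [← Module.annihilator_eq_bot, Submodule.eq_bot_iff, Module.mem_annihilator]

section

universe v

variable (R : Type*) (N : Type v) [Semiring R] [AddCommMonoid N] [Module R N]

theorem pi_toSpanSingleton_injective [FaithfulSMul R N] :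
    Function.Injective (LinearMap.pi (LinearMap.toSpanSingleton R N)) :=
  smul_left_injective'

theorem quotient_rad_faithful_iff_cogenerates_general :
    FaithfulSMul R N ↔ ∃ (A : Type v) (φ : R →ₗ[R] (A → N)), Function.Injective φ := by
  constructor
  · intro _
    exact ⟨N, LinearMap.pi (LinearMap.toSpanSingleton R N), pi_toSpanSingleton_injective R N⟩
  · rintro ⟨A, φ, hφ⟩
    have : FaithfulSMul R (A → N) := .of_injective φ hφ
    exact faithfulSMul_of_faithfulSMul_function A

end

/-- `M/Rad(M)` is a faithful `R`-module iff `M/Rad(M)` cogenerates `R`, i.e. iff there is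
an injective linear map from `R` into a direct product of copies of `M/Rad(M)`. -/
theorem quotient_rad_faithful_iff_cogenerates (R M : Type u) [Ring R] [AddCommGroup M]
    [Module R M] :
    (∀ r : R, (∀ x : M ⧸ moduleRad R M, r • x = 0) → r = 0) ↔
      ∃ (A : Type u) (φ : R →ₗ[R] (A → M ⧸ moduleRad R M)), Function.Injective φ :=
  faithfulSMul_iff_forall_smul_eq_zero.symm.trans
    (quotient_rad_faithful_iff_cogenerates_general R (M ⧸ moduleRad R M))
end

section
/- If a left R-module M is W-regular, i.e., M is projective and every cyclic submodule of M is a direct summand of M, then M is J-torsionless. -/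
/-- A module `M` is J-torsionless if for every nonzero `m ∈ M` there is a linear map
`f : M → R` with `f m ∉ J(R)`, where `J(R)` is the Jacobson radical of `R`. -/
def IsJTorsionless (R M : Type*) [Ring R] [AddCommGroup M] [Module R M] : Prop :=
  ∀ m : M, m ≠ 0 → ∃ f : M →ₗ[R] R, f m ∉ Ideal.jacobson (⊥ : Ideal R)

/-!
A projection of `M` onto a projective cyclic summand `Rm`, followed by a splitting of
`R → Rm`, `r ↦ r m`, is a functional `f` with `f(m) m = m`. If `f(m)` lay in `J(R)`, then
`Rm = J(R) Rm`, so `m = 0` by Nakayama's lemma.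
-/

theorem exists_linearMap_smul_eq_of_span_singleton_eq_top {R P : Type*} [Semiring R]
    [AddCommMonoid P] [Module R P] [Module.Projective R P] {p : P}
    (hp : Submodule.span R {p} = ⊤) :
    ∃ g : P →ₗ[R] R, ∀ x, g x • p = x := by
  have hrange : (LinearMap.toSpanSingleton R P p).range = ⊤ := by
    rw [LinearMap.range_toSpanSingleton, hp]
  obtain ⟨g, hg⟩ := (LinearMap.toSpanSingleton R P p).exists_rightInverse_of_surjective hrange
  exact ⟨g, LinearMap.congr_fun hg⟩

section Ring

variable {R M : Type*} [Ring R] [AddCommGroup M] [Module R M]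

theorem exists_linearMap_apply_smul_eq_self {m : M} [Module.Projective R (Submodule.span R {m})]
    (hm : IsComplemented (Submodule.span R {m})) : ∃ f : M →ₗ[R] R, f m • m = m := by
  obtain ⟨N, hN⟩ := hm
  let m' : Submodule.span R {m} := ⟨m, Submodule.mem_span_singleton_self m⟩
  have hspan : Submodule.span R {m'} = ⊤ := by
    rw [Submodule.span_singleton_eq_top_iff]
    rintro ⟨x, hx⟩
    obtain ⟨r, rfl⟩ := Submodule.mem_span_singleton.mp hx
    exact ⟨r, rfl⟩
  obtain ⟨g, hg⟩ := exists_linearMap_smul_eq_of_span_singleton_eq_top hspan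
  have hm' : Submodule.projectionOnto _ N hN m = m' := Submodule.projectionOnto_apply_left hN m'
  refine ⟨g ∘ₗ Submodule.projectionOnto _ N hN, ?_⟩
  rw [LinearMap.comp_apply, hm']
  exact congrArg Subtype.val (hg m')

theorem projective_of_isComplemented [Module.Projective R M] {N : Submodule R M}
    (hN : IsComplemented N) : Module.Projective R N := by
  obtain ⟨N', hNN'⟩ := hN
  exact .of_split N.subtype (N.projectionOnto N' hNN') (N.projectionOnto_comp_subtype hNN')

theorem eq_zero_of_mem_jacobson_of_smul_eq_self {r : R} {m : M} (hr : r ∈ Ring.jacobson R)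
    (hrm : r • m = m) : m = 0 := by
  have hle : Submodule.span R {m} ≤ Ring.jacobson R • Submodule.span R {m} := by
    rw [Submodule.span_singleton_le_iff_mem]
    simpa only [hrm] using Submodule.smul_mem_smul hr (Submodule.mem_span_singleton_self m)
  exact Submodule.span_singleton_eq_bot.mp
    ((Submodule.fg_span_singleton m).eq_bot_of_le_jacobson_smul hle)

end Ring

theorem isJTorsionless_of_wRegular_general (R M : Type*) [Ring R] [AddCommGroup M] [Module R M]
    (hproj : ∀ m : M, Module.Projective R (Submodule.span R {m}))
    (hcyc : ∀ m : M, IsComplemented (Submodule.span R {m})) :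
    IsJTorsionless R M := by
  intro m hm
  have := hproj m
  obtain ⟨f, hf⟩ := exists_linearMap_apply_smul_eq_self (hcyc m)
  refine ⟨f, fun hfm => hm ?_⟩
  rw [Ideal.jacobson_bot] at hfm
  exact eq_zero_of_mem_jacobson_of_smul_eq_self hfm hf

/-- If `M` is W-regular (projective and every cyclic submodule is a direct summand),
then `M` is J-torsionless. -/
theorem isJTorsionless_of_wRegular (R M : Type*) [Ring R] [AddCommGroup M] [Module R M]
    (hproj : Module.Projective R M)
    (hcyc : ∀ m : M, ∃ N : Submodule R M, IsCompl (Submodule.span R {m}) N) :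
    IsJTorsionless R M :=
  isJTorsionless_of_wRegular_general R M (fun m => projective_of_isComplemented (hcyc m)) hcyc
end

section
/- Let R be a semiprime ring and T a simple left R-module. If T is torsionless, then T is J-torsionless. -/
/-- A ring `R` is semiprime if it has no nonzero nilpotent two-sided ideal:
every two-sided ideal `I` with `I^n = 0` for some `n > 0` (i.e. every product of `n`
elements of `I` vanishes) is zero. -/
def IsSemiprimeRing (R : Type*) [Ring R] : Prop :=
  ∀ I : TwoSidedIdeal R,
    (∃ n : ℕ, 0 < n ∧ ∀ f : Fin n → R, (∀ i, f i ∈ I) → (List.ofFn f).prod = 0) → I = ⊥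

/-- A module `M` is torsionless if for every nonzero `m ∈ M` there is a linear map
`f : M → R` with `f m ≠ 0`. -/
def IsTorsionless (R M : Type*) [Ring R] [AddCommGroup M] [Module R M] : Prop :=
  ∀ m : M, m ≠ 0 → ∃ f : M →ₗ[R] R, f m ≠ 0

/-!
The Jacobson radical kills every simple module. If `f m ∈ J(R)` and `J(R)` kills `m`, then
`f m * r * f m = f ((f m * r) • m) = 0` for all `r`, so `f m` generates a two-sided ideal of square
zero. Hence over a semiprime ring `f m = 0`.
-/

theorem mul_mul_eq_zero_of_mem_span {R : Type*} [NonUnitalRing R] {s t : Set R}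
    (hst : ∀ x ∈ s, ∀ y ∈ t, ∀ r, x * r * y = 0)
    {a b : R} (ha : a ∈ TwoSidedIdeal.span s) (hb : b ∈ TwoSidedIdeal.span t) (r : R) :
    a * r * b = 0 := by
  have mul_mul_right : ∀ x ∈ s, ∀ r, x * r * b = 0 := by
    intro x hx
    induction hb using TwoSidedIdeal.span_induction with
    | mem y hy => exact hst x hx y hy
    | zero => simp
    | add y z _ _ hy hz => simp [mul_add, hy, hz]
    | neg y _ hy => simp [hy]
    | left_absorb c y _ hy => exact fun r ↦ by rw [← mul_assoc, mul_assoc x, hy]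
    | right_absorb c y _ hy => simp [← mul_assoc, hy]
  induction ha using TwoSidedIdeal.span_induction generalizing r with
  | mem x hx => exact mul_mul_right x hx r
  | zero => simp
  | add x y _ _ hx hy => simp [add_mul, hx, hy]
  | neg x _ hx => simp [hx]
  | left_absorb c x _ hx => rw [mul_assoc c, mul_assoc c, hx, mul_zero]
  | right_absorb c x _ hx => rw [mul_assoc x, hx]

namespace IsSemiprimeRing

variable {R : Type*} [Ring R]

theorem eq_bot_of_mul_eq_zero (hR : IsSemiprimeRing R) {I : TwoSidedIdeal R}
    (hI : ∀ a ∈ I, ∀ b ∈ I, a * b = 0) : I = ⊥ :=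
  hR I ⟨2, two_pos, fun f hf ↦ by simpa using hI _ (hf 0) _ (hf 1)⟩

theorem eq_zero_of_forall_mul_mul_self_eq_zero (hR : IsSemiprimeRing R) {x : R}
    (hx : ∀ r, x * r * x = 0) : x = 0 := by
  have span_eq_bot : TwoSidedIdeal.span {x} = ⊥ := hR.eq_bot_of_mul_eq_zero fun a ha b hb ↦ by
    simpa using mul_mul_eq_zero_of_mem_span (by simpa using hx) ha hb 1
  have x_mem : x ∈ TwoSidedIdeal.span {x} := TwoSidedIdeal.subset_span rfl
  rwa [span_eq_bot, TwoSidedIdeal.mem_bot] at x_mem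

theorem apply_eq_zero_of_apply_mem_annihilator {M : Type*} [AddCommGroup M] [Module R M]
    (hR : IsSemiprimeRing R) {f : M →ₗ[R] R} {m : M} (hm : f m ∈ Module.annihilator R M) :
    f m = 0 :=
  hR.eq_zero_of_forall_mul_mul_self_eq_zero fun r ↦ calc
    f m * r * f m = f ((f m * r) • m) := by rw [map_smul, smul_eq_mul]
    _ = f (f m • r • m) := by rw [mul_smul]
    _ = 0 := by rw [Module.mem_annihilator.mp hm, map_zero]

end IsSemiprimeRing

theorem isJTorsionless_of_simple_torsionless_general (R M : Type*) [Ring R] [AddCommGroup M]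
    [Module R M] (hJ : Ring.jacobson R ≤ Module.annihilator R M)
    (hR : IsSemiprimeRing R) (hM : IsTorsionless R M) :
    IsJTorsionless R M := by
  intro m hm
  obtain ⟨f, hf⟩ := hM m hm
  refine ⟨f, fun hfm ↦ hf (hR.apply_eq_zero_of_apply_mem_annihilator (hJ ?_))⟩
  rwa [← Ideal.jacobson_bot]

/-- A simple torsionless module over a semiprime ring is J-torsionless. -/
theorem isJTorsionless_of_simple_torsionless (R T : Type*) [Ring R] [AddCommGroup T]
    [Module R T] [IsSimpleModule R T]
    (hR : IsSemiprimeRing R) (hT : IsTorsionless R T) :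
    IsJTorsionless R T :=
  isJTorsionless_of_simple_torsionless_general R T
    (IsSemisimpleModule.jacobson_le_annihilator R T) hR hT
end

section
/- Let M be a finitely generated left module over a semiprime ring R. If every simple factor module of M is torsionless, then M is J-torsionless. -/
/-!
Let `S` be a simple factor of `M` and `f : S →ₗ[R] R` nonzero. Since the left ideal `range f` is not
square-zero, `x ↦ f x • s` is a nonzero endomorphism of `S` for some `s`, hence bijective by Schur's
lemma. This makes `S` a direct summand of `R`, so projective; and since `J(R)` annihilates `S`, it
also forces `f x ∉ J(R)` for `x ≠ 0`. Projectivity splits every maximal submodule off `M`, so `M` is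
semisimple, its maximal submodules intersect in zero, and the maps `M → S → R` detect every nonzero
element modulo `J(R)`.
-/

theorem sSup_atoms_eq_top_of_forall_isCoatom_isComplemented {α : Type*} [CompleteLattice α]
    [IsModularLattice α] [IsCoatomic α] (h : ∀ a : α, IsCoatom a → IsComplemented a) :
    sSup {a : α | IsAtom a} = ⊤ := by
  by_contra hne
  obtain ⟨c, hc, hle⟩ := (eq_top_or_exists_le_coatom _).resolve_left hne
  obtain ⟨a, hca⟩ := h c hc
  have ha : IsAtom a := hca.isCoatom_iff_isAtom.mp hc
  have hac : a ≤ c := (le_sSup (s := {a | IsAtom a}) ha).trans hle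
  exact ha.1 (hca.disjoint.symm.eq_bot_of_le hac)

section

variable {R M : Type*} [Ring R] [AddCommGroup M] [Module R M]

theorem isComplemented_of_projective_quotient (N : Submodule R M) [Module.Projective R (M ⧸ N)] :
    IsComplemented N := by
  obtain ⟨g, hg⟩ := N.mkQ.exists_rightInverse_of_surjective N.range_mkQ
  have hidem : IsIdempotentElem (g ∘ₗ N.mkQ) :=
    LinearMap.ext fun x => congrArg g (LinearMap.congr_fun hg (N.mkQ x))
  have hker : LinearMap.ker (g ∘ₗ N.mkQ) = N := by
    rw [LinearMap.ker_comp_of_ker_eq_bot _ (LinearMap.ker_eq_bot_of_inverse hg), N.ker_mkQ]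
  exact ⟨_, hker ▸ (LinearMap.IsIdempotentElem.isCompl hidem).symm⟩

theorem isSemisimpleModule_of_forall_isCoatom_projective_quotient [IsCoatomic (Submodule R M)]
    (h : ∀ N : Submodule R M, IsCoatom N → Module.Projective R (M ⧸ N)) :
    IsSemisimpleModule R M where
  toComplementedLattice := complementedLattice_of_sSup_atoms_eq_top <|
    sSup_atoms_eq_top_of_forall_isCoatom_isComplemented fun N hN =>
      have := h N hN
      isComplemented_of_projective_quotient N

theorem IsTorsionless.exists_ne_zero [Nontrivial M] (h : IsTorsionless R M) :
    ∃ f : M →ₗ[R] R, f ≠ 0 := by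
  obtain ⟨m, hm⟩ := exists_ne (0 : M)
  obtain ⟨f, hf⟩ := h m hm
  exact ⟨f, fun h0 => hf (LinearMap.congr_fun h0 m)⟩

theorem isJTorsionless_of_jacobson_eq_bot (hM : Module.jacobson R M = ⊥)
    (h : ∀ N : Submodule R M, IsCoatom N → IsJTorsionless R (M ⧸ N)) : IsJTorsionless R M := by
  intro m hm
  have hmJ : m ∉ Module.jacobson R M := by rwa [hM, Submodule.mem_bot]
  obtain ⟨N, hN, hmN⟩ : ∃ N : Submodule R M, IsCoatom N ∧ m ∉ N := by
    simpa [Module.jacobson] using hmJ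
  obtain ⟨f, hf⟩ := h N hN (N.mkQ m) (by simpa using hmN)
  exact ⟨f ∘ₗ N.mkQ, hf⟩

namespace IsSemiprimeRing

theorem eq_bot_of_mul_self_eq_bot (hR : IsSemiprimeRing R) {L : Ideal R} (hL : L * L = ⊥) :
    L = ⊥ := by
  -- `L * ⊤` is the two-sided ideal generated by the left ideal `L`.
  have hsq : (L * ⊤) * (L * ⊤) = ⊥ := by
    calc (L * ⊤) * (L * ⊤) = L * (⊤ * L) * ⊤ := by simp only [mul_assoc]
      _ = ⊥ := by rw [Ideal.top_mul, hL, Ideal.bot_mul]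
  have hbot : (L * ⊤).toTwoSided = ⊥ := by
    refine hR _ ⟨2, two_pos, fun f hf => ?_⟩
    have hmem : f 0 * f 1 ∈ (L * ⊤) * (L * ⊤) :=
      Ideal.mul_mem_mul (Ideal.mem_toTwoSided.mp (hf 0)) (Ideal.mem_toTwoSided.mp (hf 1))
    rw [hsq, Ideal.mem_bot] at hmem
    simpa [List.ofFn_succ] using hmem
  refine (Submodule.eq_bot_iff L).mpr fun a ha => ?_
  have hmem : a * 1 ∈ L * ⊤ := Ideal.mul_mem_mul ha Submodule.mem_top
  rwa [← Ideal.mem_toTwoSided, hbot, TwoSidedIdeal.mem_bot, mul_one] at hmem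

theorem exists_mul_ne_zero (hR : IsSemiprimeRing R) {f : M →ₗ[R] R} (hf : f ≠ 0) :
    ∃ x y, f x * f y ≠ 0 := by
  contrapose! hf
  refine LinearMap.range_eq_bot.mp (hR.eq_bot_of_mul_self_eq_bot (eq_bot_iff.mpr ?_))
  rw [Ideal.mul_le]
  rintro _ ⟨x, rfl⟩ _ ⟨y, rfl⟩
  exact hf x y

variable {S : Type*} [AddCommGroup S] [Module R S] [IsSimpleModule R S]

theorem exists_smulRight_bijective (hR : IsSemiprimeRing R) {f : S →ₗ[R] R} (hf : f ≠ 0) :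
    ∃ s : S, Function.Bijective (f.smulRight s) := by
  obtain ⟨x, s, hxs⟩ := hR.exists_mul_ne_zero hf
  refine ⟨s, LinearMap.bijective_of_ne_zero fun h0 => hxs ?_⟩
  calc f x * f s = f (f.smulRight s x) := by simp
    _ = 0 := by simp [h0]

theorem projective_of_ne_zero (hR : IsSemiprimeRing R) {f : S →ₗ[R] R} (hf : f ≠ 0) :
    Module.Projective R S := by
  obtain ⟨s, hs⟩ := hR.exists_smulRight_bijective hf
  let e : S ≃ₗ[R] S := .ofBijective (f.smulRight s) hs
  exact .of_split f (e.symm ∘ₗ LinearMap.toSpanSingleton R S s)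
    (LinearMap.ext fun x => e.symm_apply_apply x)

theorem apply_notMem_jacobson (hR : IsSemiprimeRing R) {f : S →ₗ[R] R} (hf : f ≠ 0)
    {x : S} (hx : x ≠ 0) : f x ∉ Ideal.jacobson (⊥ : Ideal R) := by
  intro hJ
  obtain ⟨s, hs⟩ := hR.exists_smulRight_bijective hf
  rw [Ideal.jacobson_bot] at hJ
  have hann : f x • s = 0 :=
    Module.mem_annihilator.mp (IsSemisimpleModule.jacobson_le_annihilator R S hJ) s
  exact hx ((map_eq_zero_iff (f.smulRight s) hs.injective).mp hann)

end IsSemiprimeRing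

theorem isJTorsionless_of_simple_factors_torsionless_general [IsCoatomic (Submodule R M)]
    (hR : IsSemiprimeRing R)
    (hfac : ∀ N : Submodule R M, IsCoatom N → IsTorsionless R (M ⧸ N)) :
    IsJTorsionless R M := by
  have hdual (N : Submodule R M) (hN : IsCoatom N) :
      IsSimpleModule R (M ⧸ N) ∧ ∃ f : (M ⧸ N) →ₗ[R] R, f ≠ 0 := by
    have hsimple : IsSimpleModule R (M ⧸ N) := isSimpleModule_iff_isCoatom.mpr hN
    have := IsSimpleModule.nontrivial R (M ⧸ N)
    exact ⟨hsimple, (hfac N hN).exists_ne_zero⟩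
  have hss : IsSemisimpleModule R M :=
    isSemisimpleModule_of_forall_isCoatom_projective_quotient fun N hN =>
      have ⟨_, _, hf⟩ := hdual N hN
      hR.projective_of_ne_zero hf
  refine isJTorsionless_of_jacobson_eq_bot (IsSemisimpleModule.jacobson_eq_bot R M) ?_
  intro N hN x hx
  obtain ⟨_, f, hf⟩ := hdual N hN
  exact ⟨f, hR.apply_notMem_jacobson hf hx⟩

end

/-- If `M` is a finitely generated module over a semiprime ring `R` all of whose simple
factor modules (quotients by maximal submodules) are torsionless, then `M` is
J-torsionless. -/
theorem isJTorsionless_of_simple_factors_torsionless (R M : Type*) [Ring R]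
    [AddCommGroup M] [Module R M] [Module.Finite R M]
    (hR : IsSemiprimeRing R)
    (hfac : ∀ N : Submodule R M, IsCoatom N → IsTorsionless R (M ⧸ N)) :
    IsJTorsionless R M :=
  isJTorsionless_of_simple_factors_torsionless_general hR hfac
end

section
/- For a left R-module M, the following are equivalent: (1) M is (Zelmanowitz) regular, i.e., for every m ∈ M there exists f ∈ M* with m = f(m)·m; (2) M is J-torsionless and for every m ∈ M the right ideal mM* = {f(m) | f ∈ M*} equals eR for some idempotent e of R; (3) M is torsionless and for every m ∈ M the right ideal mM* equals eR for some idempotent e of R. -/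
/-!
Applying `g ∈ M*` to `m = f m • m` gives `g m = f m * g m`, so `f m` is an idempotent generating
`mM*`, and it is nonzero when `m` is; the Jacobson radical contains no nonzero idempotent.
Conversely, if `mM* = eR` with `e` idempotent, then `e = f m` for some `f`, and every `g ∈ M*` kills
`m - e • m`, because `e` acts as a left identity on `eR`.
-/

theorem mem_of_isIdempotentElem_of_mem_jacobson {R : Type*} [Ring R] {I : Ideal R} [I.IsTwoSided]
    {e : R} (he : IsIdempotentElem e) (hJ : e ∈ I.jacobson) : e ∈ I := by
  obtain ⟨s, hs⟩ := Ideal.exists_mul_add_sub_mem_of_mem_jacobson (-e) (neg_mem hJ)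
  have hmul : (s * (-e + 1) - 1) * e = -e := by
    rw [neg_add_eq_sub, sub_mul, mul_assoc, he.one_sub_mul_self, mul_zero, one_mul, zero_sub]
  exact neg_mem_iff.mp (hmul ▸ I.mul_mem_right e hs)

/-- The right ideal `mM* = {f m | f ∈ M*}` of values at `m` of the dual module, as a set. -/
def dualValues (R : Type*) {M : Type*} [Semiring R] [AddCommMonoid M] [Module R M] (m : M) :
    Set R :=
  {x : R | ∃ f : M →ₗ[R] R, f m = x}

/-- Zelmanowitz regularity of a module, the analogue for modules of von Neumann regularity. -/
def IsZelmanowitzRegular (R M : Type*) [Semiring R] [AddCommMonoid M] [Module R M] : Prop :=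
  ∀ m : M, ∃ f : M →ₗ[R] R, m = f m • m

section Semiring

variable {R M : Type*} [Semiring R] [AddCommMonoid M] [Module R M] {m : M} {f : M →ₗ[R] R}

theorem apply_mul_apply_of_eq_smul (hf : m = f m • m) (g : M →ₗ[R] R) : f m * g m = g m := by
  rw [← smul_eq_mul, ← map_smul, ← hf]

theorem isIdempotentElem_apply_of_eq_smul (hf : m = f m • m) : IsIdempotentElem (f m) :=
  apply_mul_apply_of_eq_smul hf f

theorem dualValues_eq_of_eq_smul (hf : m = f m • m) :
    dualValues R m = {x : R | ∃ r : R, x = f m * r} := by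
  ext x
  constructor
  · rintro ⟨g, rfl⟩
    exact ⟨g m, (apply_mul_apply_of_eq_smul hf g).symm⟩
  · rintro ⟨r, rfl⟩
    exact ⟨f.smulRight r, f.smulRight_apply r m⟩

theorem IsZelmanowitzRegular.exists_isIdempotentElem_dualValues_eq
    (hM : IsZelmanowitzRegular R M) (m : M) :
    ∃ e : R, IsIdempotentElem e ∧ dualValues R m = {x : R | ∃ r : R, x = e * r} :=
  let ⟨f, hf⟩ := hM m
  ⟨f m, isIdempotentElem_apply_of_eq_smul hf, dualValues_eq_of_eq_smul hf⟩

end Semiring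

section Ring

variable {R M : Type*} [Ring R] [AddCommGroup M] [Module R M]

theorem IsJTorsionless.isTorsionless (hM : IsJTorsionless R M) : IsTorsionless R M := by
  intro m hm
  obtain ⟨f, hf⟩ := hM m hm
  exact ⟨f, (ne_of_mem_of_not_mem (zero_mem _) hf).symm⟩

theorem IsTorsionless.eq_of_forall_apply_eq (hM : IsTorsionless R M) {x y : M}
    (hxy : ∀ f : M →ₗ[R] R, f x = f y) : x = y := by
  by_contra hne
  obtain ⟨f, hf⟩ := hM (x - y) (sub_ne_zero.mpr hne)
  exact hf (by rw [map_sub, hxy f, sub_self])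

theorem IsTorsionless.smul_eq_self_of_dualValues_subset (hM : IsTorsionless R M) {e : R}
    (he : IsIdempotentElem e) {m : M} (hm : dualValues R m ⊆ {x : R | ∃ r : R, x = e * r}) :
    e • m = m := by
  refine hM.eq_of_forall_apply_eq fun g => ?_
  obtain ⟨r, hr⟩ := hm ⟨g, rfl⟩
  rw [map_smul, smul_eq_mul, hr, ← mul_assoc, he.eq]

theorem IsTorsionless.isZelmanowitzRegular (hM : IsTorsionless R M)
    (hdual : ∀ m : M, ∃ e : R, IsIdempotentElem e ∧
      dualValues R m = {x : R | ∃ r : R, x = e * r}) :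
    IsZelmanowitzRegular R M := by
  intro m
  obtain ⟨e, he, hm⟩ := hdual m
  obtain ⟨f, rfl⟩ : e ∈ dualValues R m := hm ▸ ⟨1, (mul_one e).symm⟩
  exact ⟨f, (hM.smul_eq_self_of_dualValues_subset he hm.subset).symm⟩

theorem IsZelmanowitzRegular.isJTorsionless (hM : IsZelmanowitzRegular R M) :
    IsJTorsionless R M := by
  intro m hm
  obtain ⟨f, hf⟩ := hM m
  refine ⟨f, fun hJ => hm ?_⟩
  have hfm : f m = 0 :=
    mem_of_isIdempotentElem_of_mem_jacobson (isIdempotentElem_apply_of_eq_smul hf) hJ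
  rw [hf, hfm, zero_smul]

end Ring

/-- For a module `M`, the following are equivalent:
(1) `M` is (Zelmanowitz) regular: for every `m` there is `f ∈ M*` with `m = f m • m`;
(2) `M` is J-torsionless and for every `m`, `mM* = eR` for some idempotent `e`;
(3) `M` is torsionless and for every `m`, `mM* = eR` for some idempotent `e`. -/
theorem regular_tfae (R M : Type*) [Ring R] [AddCommGroup M] [Module R M] :
    List.TFAE
      [∀ m : M, ∃ f : M →ₗ[R] R, m = f m • m,
       IsJTorsionless R M ∧ ∀ m : M, ∃ e : R, IsIdempotentElem e ∧
         {x : R | ∃ f : M →ₗ[R] R, f m = x} = {x : R | ∃ r : R, x = e * r},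
       IsTorsionless R M ∧ ∀ m : M, ∃ e : R, IsIdempotentElem e ∧
         {x : R | ∃ f : M →ₗ[R] R, f m = x} = {x : R | ∃ r : R, x = e * r}] := by
  tfae_have 1 → 2 := fun hM : IsZelmanowitzRegular R M =>
    ⟨hM.isJTorsionless, hM.exists_isIdempotentElem_dualValues_eq⟩
  tfae_have 2 → 3 := fun ⟨hM, hdual⟩ => ⟨hM.isTorsionless, hdual⟩
  tfae_have 3 → 1 := fun ⟨hM, hdual⟩ => hM.isZelmanowitzRegular hdual
  tfae_finish
end

section
/- If a left R-module M is fully idempotent, i.e., for every m ∈ M one has Rm = (R·mM*)·m, where R·mM* is the left ideal of R generated by {f(m) | f ∈ M*} (so every element of Rm is a finite sum Σᵢ rᵢ fᵢ(m) m with rᵢ ∈ R, fᵢ ∈ M*), then M is J-torsionless. -/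
/-!
Full idempotency at `m` provides `a ∈ R·mM*` with `a • m = m`. If every functional sent `m` into
`J(R)`, then `a ∈ J(R)`, so `Rm = J(R)·Rm`, and Nakayama's lemma for the cyclic module `Rm` would
give `m = 0`.
-/

section Semiring

variable {R M : Type*} [Semiring R] [AddCommMonoid M] [Module R M]

variable (R) in
/-- The left ideal `R·mM*` generated by the values `f m` of the functionals `f ∈ M*`; full
idempotency of `M` is a condition on how it acts on `m`. -/
def dualEvalIdeal (m : M) : Ideal R :=
  Ideal.span (Set.range fun f : Module.Dual R M ↦ f m)

theorem dualEvalIdeal_le_iff {m : M} {I : Ideal R} :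
    dualEvalIdeal R m ≤ I ↔ ∀ f : Module.Dual R M, f m ∈ I :=
  Ideal.span_le.trans Set.range_subset_iff

theorem mem_dualEvalIdeal_iff_exists_sum {m : M} {a : R} :
    a ∈ dualEvalIdeal R m ↔
      ∃ (n : ℕ) (r : Fin n → R) (f : Fin n → Module.Dual R M), ∑ i, r i * f i m = a := by
  constructor
  · intro ha
    obtain ⟨n, r, v, rfl⟩ := Submodule.mem_span_set'.1 ha
    choose f hf using fun i ↦ (v i).2
    exact ⟨n, r, f, Finset.sum_congr rfl fun i _ ↦ congrArg (r i * ·) (hf i)⟩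
  · rintro ⟨n, r, f, rfl⟩
    exact Ideal.sum_mem _ fun i _ ↦ Ideal.mul_mem_left _ _ (dualEvalIdeal_le_iff.1 le_rfl (f i))

variable (R M) in
/-- A module `M` is fully idempotent if `Rm = (R·mM*)·m` for every `m ∈ M`; the product
`(R·mM*)·m` is encoded as the image of the ideal under `a ↦ a • m`. -/
def IsFullyIdempotent : Prop :=
  ∀ m : M,
    Submodule.span R {m} = Submodule.map (LinearMap.toSpanSingleton R M m) (dualEvalIdeal R m)

theorem coe_map_toSpanSingleton_dualEvalIdeal (m : M) :
    (Submodule.map (LinearMap.toSpanSingleton R M m) (dualEvalIdeal R m) : Set M) =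
      {x : M | ∃ (n : ℕ) (r : Fin n → R) (f : Fin n → Module.Dual R M),
        x = ∑ i, (r i * f i m) • m} := by
  ext x
  simp only [Submodule.map_coe, Set.mem_image, SetLike.mem_coe, Set.mem_ofPred_eq,
    LinearMap.toSpanSingleton_apply, mem_dualEvalIdeal_iff_exists_sum, ← Finset.sum_smul]
  constructor
  · rintro ⟨_, ⟨n, r, f, rfl⟩, rfl⟩
    exact ⟨n, r, f, rfl⟩
  · rintro ⟨n, r, f, rfl⟩
    exact ⟨_, ⟨n, r, f, rfl⟩, rfl⟩

theorem IsFullyIdempotent.exists_mem_dualEvalIdeal_smul_eq_self (h : IsFullyIdempotent R M)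
    (m : M) : ∃ a ∈ dualEvalIdeal R m, a • m = m :=
  Submodule.mem_map.1 (h m ▸ Submodule.mem_span_singleton_self m)

end Semiring

section Ring

variable {R M : Type*} [Ring R] [AddCommGroup M] [Module R M]

theorem eq_zero_of_smul_eq_self_of_mem_jacobson {a : R} {m : M}
    (ha : a ∈ Ring.jacobson R) (ham : a • m = m) : m = 0 := by
  have hmem : m ∈ Ring.jacobson R • Submodule.span R {m} := by
    simpa only [ham] using Submodule.smul_mem_smul ha (Submodule.mem_span_singleton_self m)
  have hle : Submodule.span R {m} ≤ Ring.jacobson R • Submodule.span R {m} :=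
    (Submodule.span_singleton_le_iff_mem _ _).2 hmem
  exact Submodule.span_singleton_eq_bot.1
    ((Submodule.fg_span_singleton m).eq_bot_of_le_jacobson_smul hle)

theorem IsFullyIdempotent.isJTorsionless (h : IsFullyIdempotent R M) : IsJTorsionless R M := by
  intro m hm
  by_contra! hJ
  obtain ⟨a, ha, ham⟩ := h.exists_mem_dualEvalIdeal_smul_eq_self m
  have haJ : a ∈ Ring.jacobson R := Ideal.jacobson_bot (R := R) ▸ dualEvalIdeal_le_iff.2 hJ ha
  exact hm (eq_zero_of_smul_eq_self_of_mem_jacobson haJ ham)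

end Ring

/-- If `M` is fully idempotent, i.e. for every `m ∈ M` the cyclic submodule `Rm` equals
`(R·mM*)·m` — every element of `Rm` is a finite sum `Σᵢ rᵢ • (fᵢ m) • m` with `rᵢ ∈ R`,
`fᵢ ∈ M*` — then `M` is J-torsionless. -/
theorem isJTorsionless_of_fullyIdempotent (R M : Type*) [Ring R] [AddCommGroup M]
    [Module R M]
    (hfi : ∀ m : M, (Submodule.span R {m} : Set M) =
      {x : M | ∃ (n : ℕ) (r : Fin n → R) (f : Fin n → (M →ₗ[R] R)),
        x = ∑ i : Fin n, (r i * (f i) m) • m}) :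
    IsJTorsionless R M := by
  have h : IsFullyIdempotent R M := fun m ↦ SetLike.coe_injective <|
    (hfi m).trans (coe_map_toSpanSingleton_dualEvalIdeal m).symm
  exact h.isJTorsionless
end

section
/- For a ring R, the following are equivalent: (1) every semi-simple left R-module is J-torsionless; (2) every simple left R-module is J-torsionless; (3) every maximal left ideal μ of R satisfies μ = (J(R) : r_R(μ))_l, i.e., μ = {t ∈ R | t·a ∈ J(R) for all a ∈ r_R(μ)}. -/
/-!
Evaluation at the coset of `1` identifies the dual of `R ⧸ I` with the right annihilator of `I`, so
that `R ⧸ I` is J-torsionless exactly when `I = (J(R) : r_R(I))_l`. The simple modules are the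
`R ⧸ μ` with `μ` maximal, and J-torsionlessness passes from simple to semi-simple modules because
the maximal submodules of a semi-simple module intersect in zero.
-/

universe u

section Quotient

variable {R : Type*} [Ring R] {I : Ideal R}

theorem exists_linearMap_quotient_apply_mk_iff {M : Type*} [AddCommGroup M] [Module R M]
    {t : R} {p : M → Prop} :
    (∃ f : (R ⧸ I) →ₗ[R] M, p (f (Submodule.Quotient.mk t))) ↔
      ∃ y : M, (∀ x ∈ I, x • y = 0) ∧ p (t • y) := by
  constructor
  · rintro ⟨f, hf⟩
    have apply_mk (x : R) : f (Submodule.Quotient.mk x) = x • f (Submodule.Quotient.mk 1) := by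
      rw [← map_smul, ← Submodule.Quotient.mk_smul, smul_eq_mul, mul_one]
    refine ⟨f (Submodule.Quotient.mk 1), fun x hx ↦ ?_, apply_mk t ▸ hf⟩
    rw [← apply_mk, (Submodule.Quotient.mk_eq_zero I).mpr hx, map_zero]
  · rintro ⟨y, hy, hty⟩
    exact ⟨I.liftQ (LinearMap.toSpanSingleton R M y) hy, hty⟩

theorem isJTorsionless_quotient_iff :
    IsJTorsionless R (R ⧸ I) ↔
      ∀ t : R, t ∈ I ↔
        ∀ a : R, (∀ x ∈ I, x * a = 0) → t * a ∈ Ideal.jacobson (⊥ : Ideal R) := by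
  rw [IsJTorsionless, (Submodule.Quotient.mk_surjective I).forall]
  refine forall_congr' fun t ↦ ?_
  have mem_jacobson_of_mem (ht : t ∈ I) (a : R) (ha : ∀ x ∈ I, x * a = 0) :
      t * a ∈ Ideal.jacobson (⊥ : Ideal R) := by
    rw [ha t ht]
    exact zero_mem _
  rw [ne_eq, Submodule.Quotient.mk_eq_zero,
    exists_linearMap_quotient_apply_mk_iff (p := (· ∉ Ideal.jacobson (⊥ : Ideal R))),
    not_imp_comm]
  push Not
  exact ⟨fun h ↦ ⟨mem_jacobson_of_mem, h⟩, Iff.mpr⟩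

end Quotient

namespace IsJTorsionless

variable {R M : Type*} [Ring R] [AddCommGroup M] [Module R M]

theorem exists_notMem_jacobson_of_map_ne_zero {N : Type*} [AddCommGroup N] [Module R N]
    (hN : IsJTorsionless R N) (g : M →ₗ[R] N) {m : M} (hm : g m ≠ 0) :
    ∃ f : M →ₗ[R] R, f m ∉ Ideal.jacobson (⊥ : Ideal R) :=
  let ⟨f, hf⟩ := hN (g m) hm
  ⟨f ∘ₗ g, hf⟩

theorem of_jacobson_eq_bot (hM : Module.jacobson R M = ⊥)
    (h : ∀ N : Submodule R M, IsCoatom N → IsJTorsionless R (M ⧸ N)) :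
    IsJTorsionless R M := by
  intro m hm
  have hmJ : m ∉ Module.jacobson R M := by rwa [hM, Submodule.mem_bot]
  obtain ⟨N, hN, hmN⟩ : ∃ N : Submodule R M, IsCoatom N ∧ m ∉ N := by
    simpa [Module.jacobson, Submodule.mem_sInf] using hmJ
  exact (h N hN).exists_notMem_jacobson_of_map_ne_zero N.mkQ
    (by rwa [Submodule.mkQ_apply, ne_eq, Submodule.Quotient.mk_eq_zero])

theorem of_isSimpleModule [IsSimpleModule R M]
    (h : ∀ μ : Ideal R, μ.IsMaximal → IsJTorsionless R (R ⧸ μ)) : IsJTorsionless R M := by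
  obtain ⟨μ, hμ, ⟨e⟩⟩ := isSimpleModule_iff_quot_maximal.mp ‹IsSimpleModule R M›
  exact fun m hm ↦ (h μ hμ).exists_notMem_jacobson_of_map_ne_zero e.toLinearMap
    (e.map_ne_zero_iff.mpr hm)

theorem of_isSemisimpleModule [IsSemisimpleModule R M]
    (h : ∀ μ : Ideal R, μ.IsMaximal → IsJTorsionless R (R ⧸ μ)) : IsJTorsionless R M :=
  of_jacobson_eq_bot (IsSemisimpleModule.jacobson_eq_bot R M) fun _N hN ↦
    have := isSimpleModule_iff_isCoatom.mpr hN
    of_isSimpleModule h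

end IsJTorsionless

/-- For a ring `R`, the following are equivalent:
(1) every semi-simple left `R`-module is J-torsionless;
(2) every simple left `R`-module is J-torsionless;
(3) every maximal left ideal `μ` of `R` satisfies `μ = (J(R) : r_R(μ))_l`. -/
theorem semisimple_jTorsionless_tfae (R : Type u) [Ring R] :
    List.TFAE
      [∀ (M : Type u) [AddCommGroup M] [Module R M],
         IsSemisimpleModule R M → IsJTorsionless R M,
       ∀ (M : Type u) [AddCommGroup M] [Module R M],
         IsSimpleModule R M → IsJTorsionless R M,
       ∀ μ : Ideal R, μ.IsMaximal → ∀ t : R,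
         t ∈ μ ↔ ∀ a : R, (∀ x ∈ μ, x * a = 0) → t * a ∈ Ideal.jacobson (⊥ : Ideal R)] := by
  simp only [← isJTorsionless_quotient_iff]
  tfae_have 1 → 2 := fun h M _ _ _ ↦ h M inferInstance
  tfae_have 2 → 3 := fun h μ hμ ↦ h (R ⧸ μ) (isSimpleModule_iff_isCoatom.mpr hμ.out)
  tfae_have 3 → 1 := fun h _M _ _ _ ↦ IsJTorsionless.of_isSemisimpleModule h
  tfae_finish
end
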